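/- There exists a constant C = C(m), independent of N, such that for every nonnegative function f : G → [0, ∞) and every x ∈ G, the smooth distant spherical maximal function satisfies M_S^D f(x) = max over integers 0 ≤ D ≤ N/(m+1) of (1/(D+1)) · Σ_{d=0}^{D} (σ_{N−d} * f)(x) ≤ C · max over integers 0 ≤ L ≤ c_m·N of (1/(L+1)) · Σ_{l=0}^{L} (σ_l * σ_N * f)(x). -/

import Mathlib

open Finset

noncomputable section

/-- Hamming weight on `(ℤ/(m+1)ℤ)^N`. -/
def hw {m N : ℕ} (y : Fin N → ZMod (m + 1)) : ℕ :=
  (Finset.univ.filter fun i => y i ≠ 0).card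

/-- `L¹`-normalized indicator of the sphere of radius `r` (zero if `r < 0` or `r > N`),
real-valued. -/
def sigmaR (m N : ℕ) (r : ℤ) : (Fin N → ZMod (m + 1)) → ℝ := fun x =>
  if (hw x : ℤ) = r then
    ((Finset.univ.filter fun y : Fin N → ZMod (m + 1) => (hw y : ℤ) = r).card : ℝ)⁻¹
  else 0

/-- Convolution of real-valued functions on `(ℤ/(m+1)ℤ)^N`. -/
def convR {m N : ℕ} (g f : (Fin N → ZMod (m + 1)) → ℝ) : (Fin N → ZMod (m + 1)) → ℝ :=
  fun x => ∑ y, g y * f (x - y)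

/-!
If `z` has `j` zero coordinates and `y` is uniform on the sphere of radius `l ≤ N`, then counting
the `y` with `|z - y| = N` shows that `σ_l * σ_N` is the mixture `∑ j, Bin(l, 1/m)(j) σ_{N-j}` of
distant spheres. With `L = mD`, the theorem thus reduces to the bound
`∑_{l ≤ mD} Bin(l, 1/m)(j) ≥ 1/e` for all `j ≤ D`.

Since `p ∑_{l < L} Bin(l, p)(j) = P(Bin(L, p) ≥ j + 1)`, it is enough to know that a binomial
variable reaches any integer `j` not above its mean with probability at least `1/e`. This holds for
every bounded variable `X` on `ℕ` whose tail `G k = P(X ≥ k)` is log-concave: on the one hand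
`E log (G X) ≥ ∫₀¹ log = -1` because `G X` dominates a uniform variable, on the other hand
`E log (G X) ≤ log (G j)` for `j ≤ E X` by Jensen's inequality.
-/

section LogConcave

theorem le_of_natCast_le_sum_range {g : ℕ → ℝ} {n j : ℕ} (hg_le : ∀ k, g k ≤ 1)
    (hj : (j : ℝ) ≤ ∑ k ∈ range n, g k) : j ≤ n := by
  have : ∑ k ∈ range n, g k ≤ n := by simpa using sum_le_card_nsmul (range n) g 1 fun k _ => hg_le k
  exact_mod_cast hj.trans this

theorem sum_mul_le_sum_range_of_antitoneOn {δ g : ℕ → ℝ} {n j : ℕ}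
    (hg_nonneg : ∀ k, 0 ≤ g k) (hg_le : ∀ k, g k ≤ 1) (hδ_anti : AntitoneOn δ (Set.Iio n))
    (hδ_nonpos : ∀ k < n, δ k ≤ 0) (hj : (j : ℝ) ≤ ∑ k ∈ range n, g k) :
    ∑ k ∈ range n, g k * δ k ≤ ∑ k ∈ range j, δ k := by
  have hjn : j ≤ n := le_of_natCast_le_sum_range hg_le hj
  rcases n.eq_zero_or_pos with rfl | hn
  · simp [Nat.le_zero.1 hjn]
  have hpivot : j - 1 < n := by omega
  have hrange : {k ∈ range n | k < j} = range j := by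
    ext k; simp only [mem_filter, mem_range]; omega
  have hterm : ∀ k ∈ range n, g k * δ k - (if k < j then δ k else 0) ≤
      (g k - if k < j then 1 else 0) * δ (j - 1) := by
    intro k hk
    have hkn : k < n := mem_range.1 hk
    split_ifs with hkj
    · have := hδ_anti hkn hpivot (by omega : k ≤ j - 1)
      nlinarith [hg_le k]
    · have := hδ_anti hpivot hkn (by omega : j - 1 ≤ k)
      nlinarith [hg_nonneg k]
  have hsum := sum_le_sum hterm
  rw [sum_sub_distrib, ← sum_filter, hrange, ← sum_mul, sum_sub_distrib, ← sum_filter, hrange,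
    sum_const, card_range, nsmul_one] at hsum
  nlinarith [hδ_nonpos (j - 1) hpivot]

theorem antitoneOn_log_succ_sub_log {G : ℕ → ℝ} {n : ℕ} (hpos : ∀ k ≤ n, 0 < G k)
    (hlc : ∀ k, G k * G (k + 2) ≤ G (k + 1) ^ 2) :
    AntitoneOn (fun k => Real.log (G (k + 1)) - Real.log (G k)) (Set.Iio n) := by
  refine antitoneOn_of_add_one_le Set.ordConnected_Iio fun k _ _ hk => ?_
  have hk : k + 1 < n := hk
  have h₀ := hpos k (by omega)
  have h₂ := hpos (k + 2) (by omega)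
  have hlog := Real.log_le_log (by positivity) (hlc k)
  rw [Real.log_mul h₀.ne' h₂.ne', Real.log_pow] at hlog
  push_cast at hlog
  change Real.log (G (k + 2)) - Real.log (G (k + 1)) ≤ _
  linarith

theorem sub_le_mul_log_sub_log {a b : ℝ} (ha : 0 < a) (hb : 0 < b) :
    b - a ≤ b * (Real.log b - Real.log a) := by
  have h := mul_le_mul_of_nonneg_left (Real.one_sub_inv_le_log_of_pos (div_pos hb ha)) hb.le
  rwa [Real.log_div hb.ne' ha.ne', inv_div, mul_sub, mul_one, mul_div_cancel₀ a hb.ne'] at h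

/-- When `G k = P(X ≥ k)` with `X ≤ n`, the sum `∑ k ∈ range n, G (k + 1)` is `E X`, and Abel
summation turns `E log (G X)` into `∑ k ∈ range n, G (k + 1) * (log (G (k + 1)) - log (G k))`. -/
theorem exp_neg_one_le_of_logConcave {G : ℕ → ℝ} {n j : ℕ} (hzero : G 0 = 1)
    (hpos : ∀ k ≤ n, 0 < G k) (hnonneg : ∀ k, 0 ≤ G k) (hanti : Antitone G)
    (hlc : ∀ k, G k * G (k + 2) ≤ G (k + 1) ^ 2) (hj : (j : ℝ) ≤ ∑ k ∈ range n, G (k + 1)) :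
    Real.exp (-1) ≤ G j := by
  have hle_one : ∀ k, G k ≤ 1 := fun k => hzero ▸ hanti k.zero_le
  have hjn : j ≤ n := le_of_natCast_le_sum_range (fun k => hle_one (k + 1)) hj
  rw [← Real.le_log_iff_exp_le (hpos j hjn)]
  calc (-1 : ℝ) ≤ G n - G 0 := by linarith [hnonneg n]
    _ = ∑ k ∈ range n, (G (k + 1) - G k) := (sum_range_sub G n).symm
    _ ≤ ∑ k ∈ range n, G (k + 1) * (Real.log (G (k + 1)) - Real.log (G k)) :=
      sum_le_sum fun k hk => by
        rw [mem_range] at hk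
        exact sub_le_mul_log_sub_log (hpos k hk.le) (hpos (k + 1) hk)
    _ ≤ ∑ k ∈ range j, (Real.log (G (k + 1)) - Real.log (G k)) :=
      sum_mul_le_sum_range_of_antitoneOn (fun k => hnonneg _) (fun k => hle_one _)
        (antitoneOn_log_succ_sub_log hpos hlc)
        (fun k hk => sub_nonpos.2 (Real.log_le_log (hpos _ hk) (hanti k.le_succ))) hj
    _ = Real.log (G j) := by
      rw [sum_range_sub (fun k => Real.log (G k)), hzero, Real.log_one, sub_zero]

theorem sum_Ico_mul_sum_Ico_le_sq {w : ℕ → ℝ} (hnonneg : ∀ k, 0 ≤ w k)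
    (hlc : ∀ i k, i ≤ k → w i * w (k + 1) ≤ w (i + 1) * w k) (n k : ℕ) :
    (∑ i ∈ Ico k n, w i) * ∑ i ∈ Ico (k + 2) n, w i ≤ (∑ i ∈ Ico (k + 1) n, w i) ^ 2 := by
  rcases Nat.lt_or_ge (k + 1) n with hk | hk
  · have hcross : w k * ∑ i ∈ Ico (k + 2) n, w i ≤ w (k + 1) * ∑ i ∈ Ico (k + 1) n, w i := by
      obtain ⟨n, rfl⟩ := Nat.exists_eq_add_one.2 (by omega : 0 < n)
      rw [← sum_Ico_add' w (k + 1) n 1, mul_sum, mul_sum]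
      calc ∑ i ∈ Ico (k + 1) n, w k * w (i + 1)
          ≤ ∑ i ∈ Ico (k + 1) n, w (k + 1) * w i :=
            sum_le_sum fun i hi => hlc k i (by have := mem_Ico.1 hi; omega)
        _ ≤ ∑ i ∈ Ico (k + 1) (n + 1), w (k + 1) * w i :=
            sum_le_sum_of_subset_of_nonneg (Ico_subset_Ico_right n.le_succ)
              fun i _ _ => mul_nonneg (hnonneg _) (hnonneg _)
    have hsplit₁ := sum_eq_sum_Ico_succ_bot (k.lt_succ_self.trans hk) w
    have hsplit₂ := sum_eq_sum_Ico_succ_bot hk w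
    calc (∑ i ∈ Ico k n, w i) * ∑ i ∈ Ico (k + 2) n, w i
        = w k * ∑ i ∈ Ico (k + 2) n, w i +
            (∑ i ∈ Ico (k + 1) n, w i) * ∑ i ∈ Ico (k + 2) n, w i := by rw [hsplit₁, add_mul]
      _ ≤ w (k + 1) * ∑ i ∈ Ico (k + 1) n, w i +
            (∑ i ∈ Ico (k + 1) n, w i) * ∑ i ∈ Ico (k + 2) n, w i := by gcongr
      _ = (∑ i ∈ Ico (k + 1) n, w i) ^ 2 := by rw [mul_comm (w _), ← mul_add, ← hsplit₂, sq]
  · rw [Ico_eq_empty_of_le (by omega : n ≤ k + 2), sum_empty, mul_zero]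
    positivity

end LogConcave

section Binomial

theorem choose_mul_choose_succ_le (n : ℕ) {i k : ℕ} (hik : i ≤ k) :
    n.choose i * n.choose (k + 1) ≤ n.choose (i + 1) * n.choose k := by
  refine Nat.le_of_mul_le_mul_right (c := (i + 1) * (k + 1)) ?_ (by positivity)
  calc n.choose i * n.choose (k + 1) * ((i + 1) * (k + 1))
      = n.choose i * (n.choose (k + 1) * (k + 1)) * (i + 1) := by ring
    _ = n.choose i * n.choose k * ((n - k) * (i + 1)) := by rw [Nat.choose_succ_right_eq]; ring
    _ ≤ n.choose i * n.choose k * ((n - i) * (k + 1)) := by gcongr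
    _ = n.choose (i + 1) * (i + 1) * n.choose k * (k + 1) := by rw [Nat.choose_succ_right_eq]; ring
    _ = n.choose (i + 1) * n.choose k * ((i + 1) * (k + 1)) := by ring

theorem choose_mul_choose_sub {n k l : ℕ} (hk : k ≤ n) (hl : l ≤ n) :
    n.choose k * k.choose (n - l) = n.choose l * l.choose (n - k) := by
  rcases Nat.lt_or_ge l (n - k) with hlt | hle
  · rw [Nat.choose_eq_zero_of_lt hlt, Nat.choose_eq_zero_of_lt (by omega : k < n - l), mul_zero,
      mul_zero]
  · rw [Nat.choose_mul hle, Nat.choose_symm hk, Nat.sub_sub_self hk,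
      Nat.choose_symm_of_eq_add (by omega : k = n - l + (l - (n - k)))]

/-- The mass `n.choose k * p ^ k * (1 - p) ^ (n - k)` that the binomial distribution with
parameters `n` and `p` gives to `k`; it vanishes for `n < k`. -/
def binomialWeight (p : ℝ) (n k : ℕ) : ℝ := n.choose k * p ^ k * (1 - p) ^ (n - k)

/-- The probability that a binomial variable with parameters `n` and `p` is at least `k`. -/
def binomialTail (p : ℝ) (n k : ℕ) : ℝ := ∑ i ∈ Ico k (n + 1), binomialWeight p n i

theorem binomialWeight_eq_zero_of_lt (p : ℝ) {n k : ℕ} (hnk : n < k) :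
    binomialWeight p n k = 0 := by
  simp [binomialWeight, Nat.choose_eq_zero_of_lt hnk]

theorem binomialWeight_one_div {m : ℕ} (hm : m ≠ 0) (n k : ℕ) :
    binomialWeight (1 / m) n k = n.choose k * ((m - 1 : ℕ) : ℝ) ^ (n - k) / m ^ n := by
  rcases Nat.lt_or_ge n k with hnk | hkn
  · simp [binomialWeight_eq_zero_of_lt _ hnk, Nat.choose_eq_zero_of_lt hnk]
  · have hbase : 1 - 1 / (m : ℝ) = (m - 1 : ℕ) / m := by
      rw [Nat.cast_pred (Nat.pos_of_ne_zero hm)]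
      field_simp
    have hpow : (m : ℝ) ^ n = m ^ k * m ^ (n - k) := by rw [← pow_add, Nat.add_sub_cancel' hkn]
    rw [binomialWeight, hbase, hpow, div_pow, div_pow, one_pow]
    ring

theorem binomialWeight_succ_succ (p : ℝ) (n k : ℕ) :
    binomialWeight p (n + 1) (k + 1) =
      (1 - p) * binomialWeight p n (k + 1) + p * binomialWeight p n k := by
  rcases Nat.lt_or_ge n (k + 1) with hnk | hkn
  · rw [binomialWeight_eq_zero_of_lt p hnk]
    simp only [binomialWeight, Nat.choose_succ_succ, Nat.choose_eq_zero_of_lt hnk,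
      Nat.add_sub_add_right]
    push_cast
    ring
  · obtain ⟨r, rfl⟩ := Nat.exists_eq_add_of_le hkn
    simp only [binomialWeight, Nat.choose_succ_succ, Nat.add_sub_cancel_left,
      show k + 1 + r - k = r + 1 by omega, Nat.add_sub_add_right]
    push_cast
    ring

theorem binomialTail_eq_zero_of_lt (p : ℝ) {n k : ℕ} (hnk : n < k) : binomialTail p n k = 0 := by
  rw [binomialTail, Ico_eq_empty_of_le hnk, sum_empty]

theorem binomialTail_eq_add_succ (p : ℝ) (n k : ℕ) :
    binomialTail p n k = binomialWeight p n k + binomialTail p n (k + 1) := by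
  rcases Nat.lt_or_ge n k with hnk | hkn
  · rw [binomialTail_eq_zero_of_lt p hnk, binomialWeight_eq_zero_of_lt p hnk,
      binomialTail_eq_zero_of_lt p (Nat.lt_succ_of_lt hnk), add_zero]
  · exact sum_eq_sum_Ico_succ_bot (Nat.lt_succ_of_le hkn) _

theorem binomialTail_zero_right (p : ℝ) (n : ℕ) : binomialTail p n 0 = 1 := by
  calc binomialTail p n 0 = (p + (1 - p)) ^ n := by
        rw [add_pow, binomialTail, ← range_eq_Ico]
        exact sum_congr rfl fun k _ => by rw [binomialWeight]; ring
    _ = 1 := by simp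

theorem binomialTail_succ_succ (p : ℝ) (n k : ℕ) :
    binomialTail p (n + 1) (k + 1) =
      (1 - p) * binomialTail p n (k + 1) + p * binomialTail p n k := by
  have hext : binomialTail p n (k + 1) = ∑ i ∈ Ico (k + 1) (n + 2), binomialWeight p n i := by
    rcases Nat.lt_or_ge n k with hnk | hkn
    · rw [binomialTail_eq_zero_of_lt p (Nat.lt_succ_of_lt hnk), Ico_eq_empty_of_le (by omega),
        sum_empty]
    · rw [sum_Ico_succ_top (by omega), binomialWeight_eq_zero_of_lt p n.lt_succ_self, add_zero,
        binomialTail]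
  rw [hext, binomialTail, binomialTail, ← sum_Ico_add' _ k (n + 1) 1,
    ← sum_Ico_add' _ k (n + 1) 1, mul_sum, mul_sum, ← sum_add_distrib]
  exact sum_congr rfl fun i _ => binomialWeight_succ_succ p n i

theorem sum_binomialTail_succ (p : ℝ) (n : ℕ) :
    ∑ k ∈ range n, binomialTail p n (k + 1) = n * p := by
  induction n with
  | zero => simp
  | succ n ih =>
    have hshift : ∑ k ∈ range (n + 1), binomialTail p n k = n * p + 1 := by
      rw [sum_range_succ', ih, binomialTail_zero_right]
    simp_rw [binomialTail_succ_succ]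
    rw [sum_add_distrib, ← mul_sum, ← mul_sum, sum_range_succ, ih, hshift,
      binomialTail_eq_zero_of_lt p n.lt_succ_self]
    push_cast
    ring

theorem mul_sum_binomialWeight (p : ℝ) (L k : ℕ) :
    p * ∑ l ∈ range L, binomialWeight p l k = binomialTail p L (k + 1) := by
  induction L with
  | zero => simp [binomialTail]
  | succ L ih =>
    rw [sum_range_succ, mul_add, ih, binomialTail_succ_succ]
    linear_combination (-p) * binomialTail_eq_add_succ p L k

variable {p : ℝ}

theorem binomialWeight_nonneg (hp₀ : 0 ≤ p) (hp₁ : p ≤ 1) (n k : ℕ) : 0 ≤ binomialWeight p n k := by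
  have : 0 ≤ 1 - p := sub_nonneg.2 hp₁
  rw [binomialWeight]
  positivity

theorem binomialWeight_mul_binomialWeight_succ_le (hp₀ : 0 ≤ p) (hp₁ : p ≤ 1) (n : ℕ) {i k : ℕ}
    (hik : i ≤ k) :
    binomialWeight p n i * binomialWeight p n (k + 1) ≤
      binomialWeight p n (i + 1) * binomialWeight p n k := by
  have : 0 ≤ 1 - p := sub_nonneg.2 hp₁
  rcases Nat.lt_or_ge n (k + 1) with hnk | hkn
  · rw [binomialWeight_eq_zero_of_lt p hnk, mul_zero]
    exact mul_nonneg (binomialWeight_nonneg hp₀ hp₁ _ _) (binomialWeight_nonneg hp₀ hp₁ _ _)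
  · have hchoose : (n.choose i * n.choose (k + 1) : ℝ) ≤ n.choose (i + 1) * n.choose k := by
      exact_mod_cast choose_mul_choose_succ_le n hik
    have hexp : n - i + (n - (k + 1)) = n - (i + 1) + (n - k) := by omega
    calc binomialWeight p n i * binomialWeight p n (k + 1)
        = n.choose i * n.choose (k + 1) *
            (p ^ (i + k + 1) * (1 - p) ^ (n - i + (n - (k + 1)))) := by
          rw [binomialWeight, binomialWeight]; ring
      _ ≤ n.choose (i + 1) * n.choose k *
            (p ^ (i + k + 1) * (1 - p) ^ (n - i + (n - (k + 1)))) := by gcongr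
      _ = binomialWeight p n (i + 1) * binomialWeight p n k := by
          rw [hexp, binomialWeight, binomialWeight]; ring

theorem binomialTail_nonneg (hp₀ : 0 ≤ p) (hp₁ : p ≤ 1) (n k : ℕ) : 0 ≤ binomialTail p n k :=
  sum_nonneg fun i _ => binomialWeight_nonneg hp₀ hp₁ n i

theorem binomialTail_pos (hp₀ : 0 < p) (hp₁ : p ≤ 1) {n k : ℕ} (hkn : k ≤ n) :
    0 < binomialTail p n k := by
  calc 0 < binomialWeight p n n := by simp [binomialWeight, hp₀]
    _ ≤ binomialTail p n k :=
      single_le_sum (fun i _ => binomialWeight_nonneg hp₀.le hp₁ n i)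
        (mem_Ico.2 ⟨hkn, n.lt_succ_self⟩)

theorem antitone_binomialTail (hp₀ : 0 ≤ p) (hp₁ : p ≤ 1) (n : ℕ) : Antitone (binomialTail p n) :=
  antitone_nat_of_succ_le fun k => by
    rw [binomialTail_eq_add_succ p n k]
    exact le_add_of_nonneg_left (binomialWeight_nonneg hp₀ hp₁ n k)

theorem exp_neg_one_le_binomialTail (hp₀ : 0 < p) (hp₁ : p ≤ 1) {n j : ℕ} (hj : j ≤ n * p) :
    Real.exp (-1) ≤ binomialTail p n j :=
  exp_neg_one_le_of_logConcave (binomialTail_zero_right p n)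
    (fun _ hk => binomialTail_pos hp₀ hp₁ hk) (binomialTail_nonneg hp₀.le hp₁ n)
    (antitone_binomialTail hp₀.le hp₁ n)
    (sum_Ico_mul_sum_Ico_le_sq (binomialWeight_nonneg hp₀.le hp₁ n)
      (fun _ _ => binomialWeight_mul_binomialWeight_succ_le hp₀.le hp₁ n) (n + 1))
    (hj.trans_eq (sum_binomialTail_succ p n).symm)

theorem exp_neg_one_le_sum_binomialWeight (hp₀ : 0 < p) (hp₁ : p ≤ 1) {n j : ℕ} (hj : j ≤ n * p) :
    Real.exp (-1) ≤ ∑ l ∈ range (n + 1), binomialWeight p l j := by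
  refine (exp_neg_one_le_binomialTail hp₀ hp₁ hj).trans (le_of_mul_le_mul_left ?_ hp₀)
  rw [mul_sum_binomialWeight, binomialTail_succ_succ]
  exact le_add_of_nonneg_left
    (mul_nonneg (sub_nonneg.2 hp₁) (binomialTail_nonneg hp₀.le hp₁ n (j + 1)))

end Binomial

section Weight

open Polynomial

theorem coeff_one_add_C_mul_X_pow {R : Type*} [CommSemiring R] (c : R) (n k : ℕ) :
    ((1 + C c * X) ^ n).coeff k = n.choose k * c ^ k := by
  have : (1 + C c * X) ^ n = ((1 + X : R[X]) ^ n).comp (C c * X) := by simp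
  rw [this, comp_C_mul_X_coeff, coeff_one_add_X_pow]

theorem coeff_C_mul_X_pow_mul_one_add_C_mul_X_pow {R : Type*} [CommSemiring R] (c d : R)
    {j n l : ℕ} (hl : l ≤ j + n) :
    ((C c * X) ^ j * (1 + C d * X) ^ n).coeff l =
      n.choose (j + n - l) * c ^ j * d ^ (l - j) := by
  rw [mul_pow, ← C_pow, mul_assoc, coeff_C_mul, coeff_X_pow_mul', coeff_one_add_C_mul_X_pow]
  split_ifs with hjl
  · rw [Nat.choose_symm_of_eq_add (by omega : n = (l - j) + (j + n - l))]
    ring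
  · rw [Nat.choose_eq_zero_of_lt (by omega : n < j + n - l)]
    simp

variable {m N : ℕ}

theorem hw_le (y : Fin N → ZMod (m + 1)) : hw y ≤ N :=
  (card_filter_le _ _).trans_eq (card_fin N)

theorem hw_eq_iff {y : Fin N → ZMod (m + 1)} : hw y = N ↔ ∀ i, y i ≠ 0 := by
  simpa [hw] using card_filter_eq_iff (s := univ) (p := fun i => y i ≠ 0)

theorem card_filter_apply_eq_zero (z : Fin N → ZMod (m + 1)) : #{i | z i = 0} = N - hw z := by
  have := card_filter_add_card_filter_not (s := univ) fun i => z i = 0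
  rw [card_fin] at this
  exact Nat.eq_sub_of_add_eq this

theorem X_pow_hw (y : Fin N → ZMod (m + 1)) :
    (X : ℕ[X]) ^ hw y = ∏ i, if y i = 0 then 1 else X := by
  simp [hw, prod_ite]

theorem card_filter_piFinset_hw_eq (S : Fin N → Finset (ZMod (m + 1))) (r : ℕ) :
    #{y ∈ Fintype.piFinset S | hw y = r} =
      (∏ i, ∑ a ∈ S i, if a = 0 then 1 else (X : ℕ[X])).coeff r := by
  rw [prod_univ_sum, ← sum_congr rfl fun y _ => X_pow_hw y, finsetSum_coeff, card_filter]
  simp only [coeff_X_pow, eq_comm]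

theorem sum_ite_one_X (S : Finset (ZMod (m + 1))) :
    (∑ a ∈ S, if a = 0 then 1 else (X : ℕ[X])) =
      (if 0 ∈ S then 1 else 0) + C #(S.erase 0) * X := by
  rw [sum_ite, filter_eq', filter_ne', sum_const, nsmul_eq_mul, ← C_eq_natCast]
  split_ifs <;> simp

theorem card_filter_hw_eq (m N r : ℕ) :
    #{y : Fin N → ZMod (m + 1) | hw y = r} = N.choose r * m ^ r := by
  rw [← Fintype.piFinset_univ, card_filter_piFinset_hw_eq, prod_const, card_fin,
    sum_ite_one_X, if_pos (mem_univ 0), card_erase_of_mem (mem_univ 0), card_univ,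
    ZMod.card, Nat.add_sub_cancel, coeff_one_add_C_mul_X_pow, Nat.cast_id]

theorem sum_erase_ite_one_X (b : ZMod (m + 1)) :
    (∑ a ∈ univ.erase b, if a = 0 then 1 else (X : ℕ[X])) =
      if b = 0 then C m * X else 1 + C (m - 1) * X := by
  rw [sum_ite_one_X]
  split_ifs with hmem hb hb
  · simp [hb] at hmem
  · rw [card_erase_of_mem hmem, card_erase_of_mem (mem_univ b), card_univ, ZMod.card,
      Nat.add_sub_cancel]
  · rw [hb, erase_idem, card_erase_of_mem (mem_univ _), card_univ, ZMod.card, Nat.add_sub_cancel,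
      zero_add]
  · simp [Ne.symm hb] at hmem

theorem card_hw_eq_and_hw_sub_eq (z : Fin N → ZMod (m + 1)) {l : ℕ} (hl : l ≤ N) :
    #{y | hw y = l ∧ hw (z - y) = N} =
      (hw z).choose (N - l) * m ^ (N - hw z) * (m - 1) ^ (l - (N - hw z)) := by
  have hset : ({y | hw y = l ∧ hw (z - y) = N} : Finset (Fin N → ZMod (m + 1))) =
      {y ∈ Fintype.piFinset fun i => univ.erase (z i) | hw y = l} := by
    ext y
    simp only [mem_filter, mem_univ, true_and, Fintype.mem_piFinset, mem_erase, hw_eq_iff,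
      Pi.sub_apply, sub_ne_zero, ne_comm, and_comm]
  have hN : N - hw z + hw z = N := Nat.sub_add_cancel (hw_le z)
  rw [hset, card_filter_piFinset_hw_eq]
  simp_rw [sum_erase_ite_one_X]
  rw [prod_ite, prod_const, prod_const, card_filter_apply_eq_zero,
    show #{i | ¬z i = 0} = hw z from rfl,
    coeff_C_mul_X_pow_mul_one_add_C_mul_X_pow _ _ (by omega), hN, Nat.cast_id]

end Weight

section Kernel

variable {m N : ℕ}

theorem sigmaR_natCast (r : ℕ) (z : Fin N → ZMod (m + 1)) :
    sigmaR m N r z = if hw z = r then (N.choose r * m ^ r : ℝ)⁻¹ else 0 := by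
  simp only [sigmaR, Nat.cast_inj, card_filter_hw_eq, Nat.cast_mul, Nat.cast_pow]

theorem sigmaR_nonneg (r : ℤ) (z : Fin N → ZMod (m + 1)) : 0 ≤ sigmaR m N r z := by
  rw [sigmaR]
  positivity

theorem convR_sigmaR_natCast (l r : ℕ) (z : Fin N → ZMod (m + 1)) :
    convR (sigmaR m N l) (sigmaR m N r) z =
      #{y | hw y = l ∧ hw (z - y) = r} *
        ((N.choose l * m ^ l : ℝ)⁻¹ * (N.choose r * m ^ r : ℝ)⁻¹) := by
  simp only [convR, sigmaR_natCast, ite_zero_mul_ite_zero]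
  rw [← sum_filter, sum_const, nsmul_eq_mul]

theorem convR_sigmaR_sigmaR_top (hm : m ≠ 0) {l : ℕ} (hl : l ≤ N) (z : Fin N → ZMod (m + 1)) :
    convR (sigmaR m N l) (sigmaR m N N) z =
      binomialWeight (1 / m) l (N - hw z) * sigmaR m N (hw z) z := by
  rw [convR_sigmaR_natCast, card_hw_eq_and_hw_sub_eq z hl, sigmaR_natCast, if_pos rfl,
    binomialWeight_one_div hm, Nat.choose_self]
  have hz := hw_le z
  have hchoose : (N.choose (hw z) * (hw z).choose (N - l) : ℝ) = N.choose l * l.choose (N - hw z) :=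
    mod_cast choose_mul_choose_sub hz hl
  have hpow : (m : ℝ) ^ N = m ^ (N - hw z) * m ^ hw z := by rw [← pow_add, Nat.sub_add_cancel hz]
  have hpos_z : (0 : ℝ) < N.choose (hw z) := mod_cast Nat.choose_pos hz
  have hpos_l : (0 : ℝ) < N.choose l := mod_cast Nat.choose_pos hl
  rw [hpow]
  push_cast
  field_simp
  linear_combination ((m - 1 : ℕ) : ℝ) ^ (l - (N - hw z)) * hchoose

theorem sum_range_convR_sigmaR_sigmaR_top (hm : m ≠ 0) {L : ℕ} (hL : L ≤ N)
    (z : Fin N → ZMod (m + 1)) :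
    ∑ l ∈ range (L + 1), convR (sigmaR m N l) (sigmaR m N N) z =
      (∑ l ∈ range (L + 1), binomialWeight (1 / m) l (N - hw z)) * sigmaR m N (hw z) z := by
  rw [sum_mul]
  exact sum_congr rfl fun l hl =>
    convR_sigmaR_sigmaR_top hm ((Nat.lt_succ_iff.1 (mem_range.1 hl)).trans hL) z

theorem sum_range_sigmaR_sub (D : ℕ) (z : Fin N → ZMod (m + 1)) :
    ∑ d ∈ range (D + 1), sigmaR m N ((N : ℤ) - d) z =
      if N - hw z ≤ D then sigmaR m N (hw z) z else 0 := by
  have hz := hw_le z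
  have hterm : ∀ d ∈ range (D + 1), sigmaR m N ((N : ℤ) - d) z =
      if d = N - hw z then sigmaR m N (hw z) z else 0 := by
    intro d hd
    rw [mem_range] at hd
    split_ifs with hdz
    · congr 1
      omega
    · rw [sigmaR, if_neg (by omega)]
  rw [sum_congr rfl hterm, sum_ite_eq']
  simp only [mem_range, Nat.lt_succ_iff]

theorem average_sigmaR_sub_le (hm : m ≠ 0) {D : ℕ} (hD : m * D ≤ N) (z : Fin N → ZMod (m + 1)) :
    1 / ((D : ℝ) + 1) * ∑ d ∈ range (D + 1), sigmaR m N ((N : ℤ) - d) z ≤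
      Real.exp 1 * m * (1 / (((m * D : ℕ) : ℝ) + 1) *
        ∑ l ∈ range (m * D + 1), convR (sigmaR m N l) (sigmaR m N N) z) := by
  have hm₁ : (1 : ℝ) ≤ m := by exact_mod_cast Nat.one_le_iff_ne_zero.2 hm
  have hp₀ : (0 : ℝ) < 1 / m := by positivity
  have hp₁ : 1 / (m : ℝ) ≤ 1 := (div_le_one (by positivity)).2 hm₁
  have hσ := sigmaR_nonneg (hw z) z
  rw [sum_range_sigmaR_sub, sum_range_convR_sigmaR_sigmaR_top hm hD]
  split_ifs with hz
  · have hW : Real.exp (-1) ≤ ∑ l ∈ range (m * D + 1), binomialWeight (1 / m) l (N - hw z) := by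
      refine exp_neg_one_le_sum_binomialWeight hp₀ hp₁ ?_
      have : ((m * D : ℕ) : ℝ) * (1 / m) = D := by push_cast; field_simp
      rw [this]
      exact_mod_cast hz
    have havg : 1 / ((D : ℝ) + 1) ≤ m * (1 / (((m * D : ℕ) : ℝ) + 1)) := by
      rw [mul_one_div, div_le_div_iff₀ (by positivity) (by positivity)]
      push_cast
      linarith
    calc 1 / ((D : ℝ) + 1) * sigmaR m N (hw z) z
        ≤ m * (1 / (((m * D : ℕ) : ℝ) + 1)) * sigmaR m N (hw z) z := by gcongr
      _ = Real.exp 1 * m * (1 / (((m * D : ℕ) : ℝ) + 1) *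
            (Real.exp (-1) * sigmaR m N (hw z) z)) := by
          rw [Real.exp_neg]
          field_simp
      _ ≤ _ := by gcongr
  · have hW : 0 ≤ ∑ l ∈ range (m * D + 1), binomialWeight (1 / m) l (N - hw z) :=
      sum_nonneg fun l _ => binomialWeight_nonneg hp₀.le hp₁ l _
    rw [mul_zero]
    positivity

end Kernel

section Convolution

variable {m N : ℕ}

theorem convR_assoc (g h f : (Fin N → ZMod (m + 1)) → ℝ) :
    convR (convR g h) f = convR g (convR h f) := by
  funext x
  simp only [convR, mul_sum, sum_mul]
  rw [sum_comm]
  refine sum_congr rfl fun y _ => ?_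
  rw [← Equiv.sum_comp (Equiv.addLeft y)]
  simp only [Equiv.coe_addLeft, add_sub_cancel_left, mul_assoc, sub_sub]

theorem mul_sum_convR {ι : Type*} (c : ℝ) (s : Finset ι) (g : ι → (Fin N → ZMod (m + 1)) → ℝ)
    (f : (Fin N → ZMod (m + 1)) → ℝ) (x : Fin N → ZMod (m + 1)) :
    c * ∑ i ∈ s, convR (g i) f x = convR (fun z => c * ∑ i ∈ s, g i z) f x := by
  simp only [convR, mul_sum, sum_mul, mul_assoc]
  exact sum_comm

theorem convR_le_mul_convR {g h f : (Fin N → ZMod (m + 1)) → ℝ} {c : ℝ}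
    (hgh : ∀ z, g z ≤ c * h z) (hf : ∀ z, 0 ≤ f z) (x : Fin N → ZMod (m + 1)) :
    convR g f x ≤ c * convR h f x := by
  rw [convR, convR, mul_sum]
  refine sum_le_sum fun z _ => ?_
  rw [← mul_assoc]
  exact mul_le_mul_of_nonneg_right (hgh z) (hf _)

end Convolution

theorem average_convR_sigmaR_sub_le {m N : ℕ} (hm : m ≠ 0) {D : ℕ} (hD : m * D ≤ N)
    {f : (Fin N → ZMod (m + 1)) → ℝ} (hf : ∀ x, 0 ≤ f x) (x : Fin N → ZMod (m + 1)) :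
    1 / ((D : ℝ) + 1) * ∑ d ∈ range (D + 1), convR (sigmaR m N ((N : ℤ) - d)) f x ≤
      Real.exp 1 * m * (1 / (((m * D : ℕ) : ℝ) + 1) *
        ∑ l ∈ range (m * D + 1), convR (sigmaR m N l) (convR (sigmaR m N N) f) x) := by
  simp_rw [← convR_assoc]
  rw [mul_sum_convR, mul_sum_convR]
  exact convR_le_mul_convR (average_sigmaR_sub_le hm hD) hf x

theorem statement15_general {m : ℕ} (hm : m ≠ 0) (N : ℕ) (f : (Fin N → ZMod (m + 1)) → ℝ)
    (hf : ∀ x, 0 ≤ f x) (x : Fin N → ZMod (m + 1)) :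
    ((range (N / (m + 1) + 1)).sup' nonempty_range_add_one fun D =>
        (1 / ((D : ℝ) + 1)) *
          ∑ d ∈ range (D + 1), convR (sigmaR m N ((N : ℤ) - d)) f x) ≤
    Real.exp 1 * m *
      ((range ((m * N) / (m + 1) + 1)).sup' nonempty_range_add_one fun L =>
        (1 / ((L : ℝ) + 1)) *
          ∑ l ∈ range (L + 1), convR (sigmaR m N (l : ℤ)) (convR (sigmaR m N (N : ℤ)) f) x) := by
  refine sup'_le _ _ fun D hD => ?_
  have hDN : D * (m + 1) ≤ N :=
    (Nat.le_div_iff_mul_le m.succ_pos).1 (Nat.lt_succ_iff.1 (mem_range.1 hD))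
  have hmD : m * D ∈ range (m * N / (m + 1) + 1) := by
    rw [mem_range, Nat.lt_succ_iff, Nat.le_div_iff_mul_le m.succ_pos, mul_assoc]
    exact Nat.mul_le_mul_left m hDN
  refine (average_convR_sigmaR_sub_le hm (by linarith) hf x).trans ?_
  gcongr
  exact le_sup' (fun L : ℕ => (1 / ((L : ℝ) + 1)) *
    ∑ l ∈ range (L + 1), convR (sigmaR m N (l : ℤ)) (convR (sigmaR m N (N : ℤ)) f) x) hmD

theorem statement15 (m : ℕ) (hm : 2 ≤ m) :
    ∃ C : ℝ, ∀ N : ℕ, 1 ≤ N → ∀ f : (Fin N → ZMod (m + 1)) → ℝ, (∀ x, 0 ≤ f x) → ∀ x,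
      -- the smooth distant spherical maximal function
      ((Finset.range (N / (m + 1) + 1)).sup' Finset.nonempty_range_add_one fun D =>
          (1 / ((D : ℝ) + 1)) *
            ∑ d ∈ Finset.range (D + 1), convR (sigmaR m N ((N : ℤ) - d)) f x) ≤
      C * ((Finset.range ((m * N) / (m + 1) + 1)).sup' Finset.nonempty_range_add_one fun L =>
          (1 / ((L : ℝ) + 1)) *
            ∑ l ∈ Finset.range (L + 1),
              convR (sigmaR m N (l : ℤ)) (convR (sigmaR m N (N : ℤ)) f) x) :=
  ⟨Real.exp 1 * m, fun N _ => statement15_general (by omega) N⟩
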